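/- Let b be a prime, let alpha >= 2 be an integer, and let P be a digital net over F_b with generating matrices C_1,...,C_s in F_b^{n x m}, with dual net P^perp. Then for every real lambda > 1/alpha, the series sum_{z=0}^infty b^{(1/alpha - lambda) z} (z+2)^{s*alpha - 1} converges and sum_{k in P^perp \ {0}} b^{-lambda mu_alpha(k)} <= 2^{s*alpha - 1} (b-1)^{s*alpha} (mu_alpha(P^perp))^{s*alpha - 1} b^{-lambda mu_alpha(P^perp)} sum_{z=0}^infty b^{(1/alpha - lambda) z} (z+2)^{s*alpha - 1}. -/

import Mathlib

open MeasureTheory Finset Matrix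

noncomputable section

/-- The `i`-th `b`-adic digit of a natural number `k`. -/
def ndigit (b k i : ℕ) : ℕ := k / b ^ i % b

/-- The truncated digit vector `ν_n(k) ∈ F_b^n`. -/
def digitVec (b n : ℕ) (k : ℕ) : Fin n → ZMod b := fun i => (ndigit b k i.val : ZMod b)

/-- The dual net of the digital net with generating matrices `C_1,...,C_s ∈ F_b^{n×m}`. -/
def dualNet {s n m : ℕ} (b : ℕ) (C : Fin s → Matrix (Fin n) (Fin m) (ZMod b)) :
    Set (Fin s → ℕ) :=
  {k | ∑ j, (C j)ᵀ.mulVec (digitVec b n (k j)) = 0}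

/-- The list of positions (in decreasing order) of the nonzero `b`-adic digits of `k`;
position `i` corresponds to the digit of `b^i`, i.e. to the exponent `c - 1` in the paper. -/
def nzPos (b k : ℕ) : List ℕ :=
  (((Finset.range k).filter fun i => ndigit b k i ≠ 0).sort (· ≤ ·)).reverse

/-- The Dick weight function `μ_α` (for `α = 1` the NRT weight). -/
def dickWeight (b α k : ℕ) : ℕ := (((nzPos b k).take α).map (· + 1)).sum

/-- The Dick weight of a vector of nonnegative integers. -/
def dickWeightV (b α : ℕ) {s : ℕ} (k : Fin s → ℕ) : ℕ := ∑ j, dickWeight b α (k j)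

/-- `μ_α(P^⊥)`, the minimal Dick weight over nonzero elements of the dual net. -/
def minWeight {s n m : ℕ} (b α : ℕ) (C : Fin s → Matrix (Fin n) (Fin m) (ZMod b)) : ℕ :=
  sInf (dickWeightV b α '' {k | k ∈ dualNet b C ∧ k ≠ 0})

/-- The list `κ_1 b^{c_1-1}, κ_2 b^{c_2-1}, ...` of nonzero terms of the `b`-adic
expansion of `k`, in decreasing order of the exponents. -/
def nzTerms (b k : ℕ) : List ℕ := (nzPos b k).map fun i => ndigit b k i * b ^ i

/-- `k^{(p)}`: the number `k` with its `p` most significant nonzero digits removed. -/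
def trunc (b p k : ℕ) : ℕ := ((nzTerms b k).drop p).sum

/-- The term `κ_p b^{c_p-1}` (with the convention `κ_0 b^{c_0-1} = 0`). -/
def topTerm (b p k : ℕ) : ℕ := if p = 0 then 0 else (nzTerms b k).getD (p - 1) 0

/-- `(k,l)` is of type `(p,q)`. -/
def IsType (b p q k l : ℕ) : Prop :=
  if k = l then p = 0 ∧ q = 0
  else trunc b p k = trunc b q l ∧ topTerm b p k ≠ topTerm b q l

/-- `(k,l) ∈ T_{≥ α}`: `(k,l)` is of type `(p,q)` for some `p + q ≥ α`. -/
def TGe (b α k l : ℕ) : Prop := ∃ p q : ℕ, α ≤ p + q ∧ IsType b p q k l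

/-- `(k,l) ∈ T_{≥ α}` for vectors: some coordinate pair lies in `T_{≥ α}`. -/
def TGeV (b α : ℕ) {s : ℕ} (k l : Fin s → ℕ) : Prop := ∃ j, TGe b α (k j) (l j)

/-- The `(i+1)`-st `b`-adic digit `ξ_{i+1}` of `x ∈ [0,1]` (for `x ≠ 1` the unique expansion
with infinitely many digits different from `b-1`; for `x = 1` all digits equal `b-1`). -/
def rdigit (b : ℕ) (x : ℝ) (i : ℕ) : ℕ :=
  if x = 1 then b - 1 else (⌊x * (b : ℝ) ^ (i + 1)⌋).toNat % b

/-- The `k`-th `b`-adic Walsh function. -/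
def walsh (b k : ℕ) (x : ℝ) : ℂ :=
  Complex.exp (2 * (Real.pi : ℂ) * Complex.I *
    ((∑ i ∈ Finset.range k, ndigit b k i * rdigit b x i : ℕ) : ℂ) / (b : ℂ))

/-- The multivariate `b`-adic Walsh function. -/
def walshV (b : ℕ) {s : ℕ} (k : Fin s → ℕ) (x : Fin s → ℝ) : ℂ := ∏ j, walsh b (k j) (x j)

/-- The unit cube `[0,1]^s`. -/
def cube (s : ℕ) : Set (Fin s → ℝ) := Set.univ.pi fun _ => Set.Icc 0 1

/-- The `(k,l)`-th Walsh coefficient of a kernel `K : [0,1]^s × [0,1]^s → ℝ`. -/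
def walshCoeff (b : ℕ) {s : ℕ} (K : (Fin s → ℝ) → (Fin s → ℝ) → ℝ) (k l : Fin s → ℕ) : ℂ :=
  ∫ x in cube s, ∫ y in cube s,
    (K x y : ℂ) * (starRingEnd ℂ) (walshV b k x) * walshV b l y

/-- The `b`-adic digital shift `x ⊕ y` of reals `x, y ∈ [0,1]`. -/
def dshift (b : ℕ) (x y : ℝ) : ℝ :=
  ∑' i : ℕ, (((rdigit b x i + rdigit b y i) % b : ℕ) : ℝ) / (b : ℝ) ^ (i + 1)

/-- Componentwise digital shift of vectors in `[0,1]^s`. -/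
def dshiftV (b : ℕ) {s : ℕ} (x y : Fin s → ℝ) : Fin s → ℝ := fun j => dshift b (x j) (y j)

/-- The `h`-th point of the digital net with generating matrices `C_1,...,C_s ∈ F_b^{n×m}`. -/
def netPoint {s n m : ℕ} (b : ℕ) (C : Fin s → Matrix (Fin n) (Fin m) (ZMod b)) (h : ℕ) :
    Fin s → ℝ :=
  fun j => ∑ i : Fin n, (((C j).mulVec (digitVec b m h) i).val : ℝ) / (b : ℝ) ^ (i.val + 1)

open Classical in
/-- The squared `L_2`-discrepancy of the point multiset `pts 0, ..., pts (N-1)` in `[0,1]^s`. -/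
def sqL2 {s : ℕ} (N : ℕ) (pts : ℕ → (Fin s → ℝ)) : ℝ :=
  ∫ y in cube s,
    ((∑ h ∈ Finset.range N, if ∀ j, 0 ≤ pts h j ∧ pts h j < y j then (1 : ℝ) else 0) / N
      - ∏ j, y j) ^ 2

/-- The Bernoulli polynomial `B_r` evaluated at a real `x`. -/
def bpoly (r : ℕ) (x : ℝ) : ℝ := Polynomial.aeval x (Polynomial.bernoulli r)

/-- The one-dimensional reproducing kernel `K_α` of the Sobolev space of smoothness `α`. -/
def sobKer1 (α : ℕ) (x y : ℝ) : ℝ :=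
  ∑ r ∈ Finset.range (α + 1), bpoly r x * bpoly r y / ((r.factorial : ℝ)) ^ 2
    + (-1 : ℝ) ^ (α + 1) * bpoly (2 * α) |x - y| / ((2 * α).factorial : ℝ)

/-- The `s`-fold product kernel `K_{α,s}`. -/
def sobKer (α : ℕ) {s : ℕ} (x y : Fin s → ℝ) : ℝ := ∏ j, sobKer1 α (x j) (y j)

/-- The constant `C_{τ,b}`. -/
def Ctau (b τ : ℕ) : ℝ :=
  if τ ≤ 1 then 1 / (2 * Real.sin (Real.pi / b))
  else (1 + 1 / (b : ℝ) + 1 / ((b : ℝ) * ((b : ℝ) + 1))) ^ (τ - 2)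
      / (2 * Real.sin (Real.pi / b)) ^ τ

end

/-- One-indexed position of the `i`-th most significant nonzero digit (`0` if absent). -/
def pc (b k i : ℕ) : ℕ := ((nzPos b k).map (· + 1)).getD i 0

/-- The value of the `i`-th most significant nonzero digit (`1` if absent). -/
def pd (b k i : ℕ) : ℕ := if pc b k i = 0 then 1 else ndigit b k (pc b k i - 1)

theorem mem_nzPos {b k p : ℕ} (hb : 2 ≤ b) : p ∈ nzPos b k ↔ ndigit b k p ≠ 0 := by
  unfold nzPos
  simp only [List.mem_reverse, Finset.mem_sort, Finset.mem_filter, Finset.mem_range,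
    and_iff_right_iff_imp]
  intro h
  by_contra hp
  apply h
  have h1 : k < b ^ p := lt_of_le_of_lt (not_lt.mp hp) (Nat.lt_pow_self hb)
  simp [ndigit, Nat.div_eq_of_lt h1]

theorem nzPos_pairwise (b k : ℕ) : (nzPos b k).Pairwise (· > ·) := by
  unfold nzPos
  rw [List.pairwise_reverse]
  exact (Finset.sortedLT_sort _).pairwise

theorem pc_eq {b k i : ℕ} (h : i < (nzPos b k).length) : pc b k i = (nzPos b k)[i] + 1 := by
  simp [pc, h]

theorem pc_eq_zero {b k i : ℕ} (h : (nzPos b k).length ≤ i) : pc b k i = 0 := by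
  simp [pc, h]

theorem pc_digit {b k i p : ℕ} (hb : 2 ≤ b) (h : pc b k i = p + 1) : ndigit b k p ≠ 0 := by
  rcases lt_or_ge i (nzPos b k).length with h1 | h1
  · rw [pc_eq h1] at h
    rw [← mem_nzPos hb]
    have : (nzPos b k)[i] = p := by omega
    rw [← this]
    exact List.getElem_mem h1
  · rw [pc_eq_zero h1] at h
    omega

theorem pc_strict {b k i i' : ℕ} (h : i < i') (h0 : pc b k i' ≠ 0) : pc b k i' < pc b k i := by
  rcases lt_or_ge i' (nzPos b k).length with h1 | h1
  · rw [pc_eq h1, pc_eq (h.trans h1)]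
    have := List.pairwise_iff_getElem.mp (nzPos_pairwise b k) i i' (h.trans h1) h1 h
    omega
  · exact absurd (pc_eq_zero h1) h0

theorem pc_anti {b k i i' : ℕ} (h : i ≤ i') : pc b k i' ≤ pc b k i := by
  rcases h.eq_or_lt with h | h
  · rw [h]
  · by_cases h0 : pc b k i' = 0
    · omega
    · exact (pc_strict h h0).le

theorem pc_surj {b k p : ℕ} (hb : 2 ≤ b) (h : ndigit b k p ≠ 0) : ∃ i, pc b k i = p + 1 := by
  rw [← mem_nzPos hb] at h
  obtain ⟨i, hi, h⟩ := List.getElem_of_mem h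
  exact ⟨i, by rw [pc_eq hi, h]⟩

theorem pc_surj_lt {b k p α : ℕ} (hb : 2 ≤ b) (hα : 0 < α) (h : ndigit b k p ≠ 0)
    (hp : pc b k (α - 1) - 1 ≤ p) : ∃ i < α, pc b k i = p + 1 := by
  obtain ⟨i, hi⟩ := pc_surj hb h
  refine ⟨i, ?_, hi⟩
  by_contra hc
  have := pc_strict (b := b) (k := k) (i := α - 1) (i' := i) (by omega) (by omega)
  omega

theorem take_sum_getD (l : List ℕ) (a : ℕ) : (l.take a).sum = ∑ i ∈ range a, l.getD i 0 := by
  induction l generalizing a with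
  | nil => simp
  | cons x l ih =>
    cases a with
    | zero => simp
    | succ a => rw [Finset.sum_range_succ']; simp [ih, add_comm]

theorem dickWeight_eq (b α k : ℕ) : dickWeight b α k = ∑ i : Fin α, pc b k i := by
  unfold dickWeight pc
  rw [List.map_take, take_sum_getD, Finset.sum_range]

theorem ndigit_lt {b : ℕ} (hb : 2 ≤ b) (k i : ℕ) : ndigit b k i < b := Nat.mod_lt _ (by omega)

theorem ndigit_ext {b k k' : ℕ} (hb : 2 ≤ b) (h : ∀ i, ndigit b k i = ndigit b k' i) : k = k' := by
  have h1 : ∀ i, k % b ^ i = k' % b ^ i := by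
    intro i
    induction i with
    | zero => simp [Nat.mod_one]
    | succ i ih =>
      have := h i
      unfold ndigit at this
      rw [Nat.mod_pow_succ, Nat.mod_pow_succ, ih, this]
  have h2 := h1 (k + k')
  have h3 : k + k' < b ^ (k + k') := Nat.lt_pow_self hb
  rwa [Nat.mod_eq_of_lt (by omega), Nat.mod_eq_of_lt (by omega)] at h2

theorem exists_digits {b : ℕ} (hb : 2 ≤ b) (r : ℕ) : ∀ d : ℕ → ℕ, (∀ i, d i < b) →
    (∀ i, r ≤ i → d i = 0) → ∃ x, ∀ i, ndigit b x i = d i := by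
  induction r with
  | zero =>
    intro d _ h
    exact ⟨0, fun i => by simp [ndigit, h i]⟩
  | succ r ih =>
    intro d hd h
    obtain ⟨x, hx⟩ := ih (fun i => d (i + 1)) (fun i => hd _) (fun i hi => h _ (by omega))
    refine ⟨d 0 + b * x, fun i => ?_⟩
    cases i with
    | zero => simp [ndigit, Nat.mod_eq_of_lt (hd 0)]
    | succ i =>
      rw [← hx i]
      unfold ndigit
      rw [pow_succ', ← Nat.div_div_eq_div_mul, Nat.add_mul_div_left _ _ (by omega),
        Nat.div_eq_of_lt (hd 0), zero_add]

theorem dickWeight_le {b α r x : ℕ} (hb : 2 ≤ b) (h : ∀ i, r ≤ i → ndigit b x i = 0) :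
    dickWeight b α x ≤ α * r := by
  rw [dickWeight_eq]
  calc ∑ i : Fin α, pc b x i ≤ ∑ i : Fin α, r := by
        refine Finset.sum_le_sum fun i _ => ?_
        by_contra hc
        have := pc_digit (b := b) (k := x) (i := i) (p := pc b x i - 1) hb (by omega)
        exact this (h _ (by omega))
    _ = α * r := by simp

theorem dickWeight_pos {b α k : ℕ} (hb : 2 ≤ b) (hα : 0 < α) (hk : k ≠ 0) :
    0 < dickWeight b α k := by
  rw [Nat.pos_iff_ne_zero]
  intro h0
  rw [dickWeight_eq, Finset.sum_eq_zero_iff] at h0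
  apply hk
  apply ndigit_ext hb
  intro p
  have h00 : ndigit b 0 p = 0 := by simp [ndigit]
  rw [h00]
  by_contra hp
  have h1 := h0 ⟨α - 1, by omega⟩ (Finset.mem_univ _)
  obtain ⟨i, hi, h2⟩ := pc_surj_lt (α := α) hb hα hp (by simp at h1; omega)
  have h3 := h0 ⟨i, hi⟩ (Finset.mem_univ _)
  simp at h3
  omega

theorem exists_split {s : ℕ} (L : Fin s → ℕ) (e : ℕ) (he : e ≤ ∑ j, L j) :
    ∃ r : Fin s → ℕ, (∀ j, r j ≤ L j) ∧ ∑ j, r j = e := by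
  induction e with
  | zero => exact ⟨fun _ => 0, by simp, by simp⟩
  | succ e ih =>
    obtain ⟨r, h1, h2⟩ := ih (by omega)
    obtain ⟨j, _, hj⟩ : ∃ j ∈ Finset.univ, r j < L j := by
      apply Finset.exists_lt_of_sum_lt
      omega
    refine ⟨Function.update r j (r j + 1), ?_, ?_⟩
    · intro i
      by_cases hi : i = j
      · subst hi; simp; omega
      · simp [hi, h1 i]
    · rw [Finset.sum_update_of_mem (Finset.mem_univ j)]
      have := Finset.sum_eq_add_sum_sdiff_singleton_of_mem (Finset.mem_univ j) r
      omega

theorem minWeight_le {s n m b α : ℕ} {C : Fin s → Matrix (Fin n) (Fin m) (ZMod b)}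
    {k : Fin s → ℕ} (h : k ∈ dualNet b C) (h0 : k ≠ 0) : minWeight b α C ≤ dickWeightV b α k :=
  Nat.sInf_le ⟨k, ⟨h, h0⟩, rfl⟩

/-- Two elements of the dual net whose digits agree outside few low positions coincide. -/
theorem dual_unique {s n m b α : ℕ} (hb : 2 ≤ b)
    {C : Fin s → Matrix (Fin n) (Fin m) (ZMod b)} {k k' : Fin s → ℕ}
    (hk : k ∈ dualNet b C) (hk' : k' ∈ dualNet b C) (r : Fin s → ℕ)
    (hr : α * ∑ j, r j < minWeight b α C)
    (h : ∀ j i, r j ≤ i → ndigit b (k j) i = ndigit b (k' j) i) : k = k' := by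
  have : NeZero b := ⟨by omega⟩
  have hx : ∀ j, ∃ x, ∀ i, ndigit b x i =
      ((ndigit b (k j) i : ZMod b) - (ndigit b (k' j) i : ZMod b)).val := by
    intro j
    apply exists_digits hb (r j)
    · intro i; exact ZMod.val_lt _
    · intro i hi; simp [h j i hi]
  choose x hx using hx
  have hdv : ∀ j, digitVec b n (x j) = digitVec b n (k j) - digitVec b n (k' j) := by
    intro j
    ext i
    simp [digitVec, hx]
  have hmem : x ∈ dualNet b C := by
    simp only [dualNet, Set.mem_ofPred_eq] at hk hk' ⊢
    simp only [hdv, Matrix.mulVec_sub, Finset.sum_sub_distrib, hk, hk', sub_zero]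
  have hx0 : x = 0 := by
    by_contra hne
    have h1 := minWeight_le (α := α) hmem hne
    have h2 : dickWeightV b α x ≤ α * ∑ j, r j := by
      unfold dickWeightV
      rw [Finset.mul_sum]
      refine Finset.sum_le_sum fun j _ => dickWeight_le hb fun i hi => ?_
      simp [hx, h j i hi]
    omega
  funext j
  apply ndigit_ext hb
  intro i
  have h1 := hx j i
  rw [hx0] at h1
  have h2 : ndigit b ((0 : Fin s → ℕ) j) i = 0 := by simp [ndigit]
  rw [h2, eq_comm, ZMod.val_eq_zero, sub_eq_zero] at h1
  have h3 := congrArg ZMod.val h1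
  rwa [ZMod.val_natCast_of_lt (ndigit_lt hb _ _), ZMod.val_natCast_of_lt (ndigit_lt hb _ _)] at h3

theorem pattern_digits {b α k k' : ℕ} (hb : 2 ≤ b) (hα : 0 < α)
    (h1 : ∀ i < α, pc b k i = pc b k' i) (h2 : ∀ i < α, pd b k i = pd b k' i) (p : ℕ)
    (hp : pc b k (α - 1) - 1 ≤ p) : ndigit b k p = ndigit b k' p := by
  have key : ∀ i < α, pc b k i = p + 1 → ndigit b k p = ndigit b k' p := by
    intro i hi h
    have h3 := h2 i hi
    unfold pd at h3
    rw [← h1 i hi, h] at h3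
    simpa using h3
  by_cases hk : ndigit b k p = 0
  · by_cases hk' : ndigit b k' p = 0
    · rw [hk, hk']
    · obtain ⟨i, hi, h⟩ := pc_surj_lt hb hα hk' (by rwa [← h1 _ (by omega)])
      exact key i hi (by rw [h1 i hi, h])
  · obtain ⟨i, hi, h⟩ := pc_surj_lt hb hα hk hp
    exact key i hi h

/-- The pattern of leading digits of a vector. -/
def pat (b α : ℕ) {s : ℕ} (k : Fin s → ℕ) : (Fin s × Fin α → ℕ) × (Fin s × Fin α → ℕ) :=
  (fun x => pc b (k x.1) x.2, fun x => pd b (k x.1) x.2)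

theorem fiber_card {s n m b α w : ℕ} (hb : 2 ≤ b) (hα : 0 < α)
    {C : Fin s → Matrix (Fin n) (Fin m) (ZMod b)} (hμ : 0 < minWeight b α C)
    (F : Finset (Fin s → ℕ)) (hF : ∀ k ∈ F, k ∈ dualNet b C ∧ k ≠ 0 ∧ dickWeightV b α k = w)
    (a : (Fin s × Fin α → ℕ) × (Fin s × Fin α → ℕ)) (ha : ∀ k ∈ F, pat b α k = a) :
    F.card ≤ b ^ ((w - minWeight b α C) / α) := by
  rcases F.eq_empty_or_nonempty with rfl | ⟨k₀, hk₀⟩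
  · simp
  set μ := minWeight b α C with hμdef
  obtain ⟨hd0, hne0, hw0⟩ := hF k₀ hk₀
  have hμw : μ ≤ w := hw0 ▸ minWeight_le hd0 hne0
  set l : Fin s → ℕ := fun j => pc b (k₀ j) (α - 1) with hl
  set L : Fin s → ℕ := fun j => l j - 1 with hL
  set e := min (∑ j, L j) ((μ - 1) / α) with he
  obtain ⟨r, hr1, hr2⟩ := exists_split L e (min_le_left _ _)
  have hpc : ∀ k ∈ F, ∀ j, ∀ i < α, pc b (k₀ j) i = pc b (k j) i := by
    intro k hk j i hi
    have h := (ha k₀ hk₀).trans (ha k hk).symm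
    exact congrFun (congrArg Prod.fst h) (j, ⟨i, hi⟩)
  have hpd : ∀ k ∈ F, ∀ j, ∀ i < α, pd b (k₀ j) i = pd b (k j) i := by
    intro k hk j i hi
    have h := (ha k₀ hk₀).trans (ha k hk).symm
    exact congrFun (congrArg Prod.snd h) (j, ⟨i, hi⟩)
  have hcard : F.card ≤ Fintype.card ((Σ j : Fin s, Fin (L j - r j)) → Fin b) := by
    rw [← Finset.card_univ]
    refine Finset.card_le_card_of_injOn
      (fun k x => ⟨ndigit b (k x.1) (r x.1 + x.2), ndigit_lt hb _ _⟩) (fun _ _ => Finset.mem_univ _)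
      ?_
    intro k hk k' hk' hkk
    refine dual_unique (α := α) hb (hF k hk).1 (hF k' hk').1 r ?_ ?_
    · rw [hr2]
      have : α * e ≤ α * ((μ - 1) / α) := Nat.mul_le_mul_left _ (min_le_right _ _)
      have := Nat.mul_div_le (μ - 1) α
      omega
    · intro j p hp
      rcases lt_or_ge p (L j) with h | h
      · have h1 := congrFun hkk ⟨j, ⟨p - r j, by omega⟩⟩
        simp only [Fin.mk.injEq] at h1
        rwa [Nat.add_sub_cancel' hp] at h1
      · rw [← pattern_digits hb hα (hpc k hk j) (hpd k hk j) p h,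
          pattern_digits hb hα (hpc k' hk' j) (hpd k' hk' j) p h]
  refine hcard.trans ?_
  simp only [Fintype.card_fun, Fintype.card_sigma, Fintype.card_fin]
  refine Nat.pow_le_pow_right (by omega) ?_
  rw [Nat.le_div_iff_mul_le hα]
  have hsum : ∑ j, (L j - r j) + e = ∑ j, L j := by
    rw [← hr2, ← Finset.sum_add_distrib]
    exact Finset.sum_congr rfl fun j _ => Nat.sub_add_cancel (hr1 j)
  have hlw : α * ∑ j, l j ≤ w := by
    rw [← hw0, Finset.mul_sum]
    unfold dickWeightV
    refine Finset.sum_le_sum fun j _ => ?_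
    rw [dickWeight_eq]
    calc α * l j = ∑ i : Fin α, l j := by simp
      _ ≤ _ := Finset.sum_le_sum fun i _ => pc_anti (by omega)
  rcases Nat.lt_or_ge ((μ - 1) / α) (∑ j, L j) with h | h
  · have he' : e = (μ - 1) / α := min_eq_right h.le
    have hD : ∑ j, L j < ∑ j, l j := by
      have hpos : 0 < ∑ j, L j := by omega
      obtain ⟨j, _, hj⟩ : ∃ j ∈ Finset.univ, L j ≠ 0 := Finset.exists_ne_zero_of_sum_ne_zero hpos.ne'
      refine Finset.sum_lt_sum (fun i _ => Nat.sub_le _ _) ⟨j, Finset.mem_univ _, ?_⟩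
      simp only [hL] at hj ⊢
      omega
    have h1 : μ ≤ α * (e + 1) := by
      rw [he']
      have := Nat.lt_mul_div_succ (μ - 1) hα
      omega
    have h2 : α * (∑ j, L j + 1) ≤ α * ∑ j, l j := Nat.mul_le_mul_left _ hD
    have h3 : (∑ j, (L j - r j)) * α + α * (e + 1) = α * (∑ j, L j + 1) := by
      rw [← hsum]; ring
    omega
  · have he' : e = ∑ j, L j := min_eq_left h
    have : ∑ j, (L j - r j) = 0 := by omega
    rw [this]; simp

theorem comp_card {ι : Type*} [Fintype ι] [DecidableEq ι] [Nonempty ι] (w : ℕ) :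
    (Finset.piAntidiag (Finset.univ : Finset ι) w).card ≤ (w + 1) ^ (Fintype.card ι - 1) := by
  obtain ⟨x₀⟩ := ‹Nonempty ι›
  have h : (w + 1) ^ (Fintype.card ι - 1) =
      (Fintype.piFinset fun _ : {x : ι // x ≠ x₀} => Finset.range (w + 1)).card := by
    simp [Fintype.card_subtype_compl]
  rw [h]
  refine Finset.card_le_card_of_injOn (fun f x => f x.1) ?_ ?_
  · intro f hf
    simp only [Finset.mem_coe, Finset.mem_piAntidiag] at hf
    simp only [Finset.mem_coe, Fintype.mem_piFinset, Finset.mem_range]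
    intro x
    have := Finset.single_le_sum (f := f) (fun _ _ => Nat.zero_le _) (Finset.mem_univ x.1)
    have hf1 : ∑ x, f x = w := hf.1
    omega
  · intro f hf g hg hfg
    simp only [Finset.mem_coe, Finset.mem_piAntidiag] at hf hg
    have h1 : ∀ x, x ≠ x₀ → f x = g x := fun x hx => congrFun hfg ⟨x, hx⟩
    have hf1 : ∑ x, f x = w := hf.1
    have hg1 : ∑ x, g x = w := hg.1
    have h2 := Finset.sum_eq_add_sum_sdiff_singleton_of_mem (Finset.mem_univ x₀) f
    have h3 := Finset.sum_eq_add_sum_sdiff_singleton_of_mem (Finset.mem_univ x₀) g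
    have h4 : ∑ x ∈ Finset.univ \ {x₀}, f x = ∑ x ∈ Finset.univ \ {x₀}, g x :=
      Finset.sum_congr rfl fun x hx => h1 x (by simpa using hx)
    funext x
    by_cases hx : x = x₀
    · subst hx; omega
    · exact h1 x hx

theorem level_card {s n m b α w : ℕ} (hb : 2 ≤ b) (hα : 0 < α)
    {C : Fin s → Matrix (Fin n) (Fin m) (ZMod b)} (hμ : 0 < minWeight b α C) (hs : 0 < s)
    (F : Finset (Fin s → ℕ)) (hF : ∀ k ∈ F, k ∈ dualNet b C ∧ k ≠ 0 ∧ dickWeightV b α k = w) :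
    F.card ≤ b ^ ((w - minWeight b α C) / α) * ((w + 1) ^ (s * α - 1) * (b - 1) ^ (s * α)) := by
  classical
  have : Nonempty (Fin s × Fin α) := ⟨(⟨0, hs⟩, ⟨0, hα⟩)⟩
  have h1 := Finset.card_le_mul_card_image_of_maps_to (f := pat b α) (s := F)
    (t := Finset.piAntidiag Finset.univ w ×ˢ
      Fintype.piFinset fun _ => Finset.Icc 1 (b - 1)) (by
      intro k hk
      rw [Finset.mem_product, Finset.mem_piAntidiag, Fintype.mem_piFinset]
      refine ⟨⟨?_, by simp⟩, ?_⟩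
      · rw [← (hF k hk).2.2, Fintype.sum_prod_type]
        simp [pat, dickWeightV, dickWeight_eq]
      · intro x
        simp only [pat, pd, Finset.mem_Icc]
        split_ifs with h
        · omega
        · have h2 := pc_digit (b := b) (k := k x.1) (i := x.2) (p := pc b (k x.1) x.2 - 1) hb
            (by omega)
          have h3 := ndigit_lt hb (k x.1) (pc b (k x.1) x.2 - 1)
          omega) (b ^ ((w - minWeight b α C) / α)) (by
      intro a _
      refine fiber_card hb hα hμ _ (fun k hk => hF k (Finset.mem_filter.mp hk).1) a
        (fun k hk => (Finset.mem_filter.mp hk).2))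
  refine h1.trans (Nat.mul_le_mul_left _ ?_)
  rw [Finset.card_product]
  refine Nat.mul_le_mul ?_ ?_
  · simpa using comp_card (ι := Fin s × Fin α) w
  · simp

theorem series_summable (b : ℕ) (hb : 2 ≤ b) (c : ℝ) (hc : c < 0) (N : ℕ) :
    Summable (fun z : ℕ => (b : ℝ) ^ (c * (z : ℝ)) * ((z : ℝ) + 2) ^ N) := by
  have hb1 : (1 : ℝ) < b := by exact_mod_cast hb
  have hb0 : (0 : ℝ) < b := by linarith
  set r : ℝ := (b : ℝ) ^ c with hr
  have hr0 : 0 < r := Real.rpow_pos_of_pos hb0 _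
  have hr1 : r < 1 := Real.rpow_lt_one_of_one_lt_of_neg hb1 hc
  have h := summable_pow_mul_geometric_of_norm_lt_one N (r := r)
    (by rw [Real.norm_eq_abs, abs_of_pos hr0]; exact hr1)
  have h2 := ((summable_nat_add_iff 2).mpr h).mul_left (r⁻¹ ^ 2)
  refine h2.congr fun z => ?_
  rw [Real.rpow_mul hb0.le, Real.rpow_natCast, ← hr]
  push_cast
  field_simp
  ring

/-- Lemma 3.3(2): weighted sum over the dual net, Dick weight `μ_α`, `α ≥ 2`. -/
theorem stmt_5 (b : ℕ) (hb : b.Prime) (α : ℕ) (hα : 2 ≤ α) (s n m : ℕ)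
    (C : Fin s → Matrix (Fin n) (Fin m) (ZMod b)) (lam : ℝ) (hlam : 1 / (α : ℝ) < lam) :
    Summable (fun z : ℕ =>
      (b : ℝ) ^ ((1 / (α : ℝ) - lam) * (z : ℝ)) * ((z : ℝ) + 2) ^ (s * α - 1)) ∧
    Summable (fun k : {k : Fin s → ℕ // k ∈ dualNet b C ∧ k ≠ 0} =>
      (b : ℝ) ^ (-(lam * (dickWeightV b α k.val : ℝ)))) ∧
    (∑' k : {k : Fin s → ℕ // k ∈ dualNet b C ∧ k ≠ 0},
        (b : ℝ) ^ (-(lam * (dickWeightV b α k.val : ℝ))))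
      ≤ 2 ^ (s * α - 1) * ((b : ℝ) - 1) ^ (s * α) * (minWeight b α C : ℝ) ^ (s * α - 1)
          * (b : ℝ) ^ (-(lam * (minWeight b α C : ℝ)))
          * ∑' z : ℕ, (b : ℝ) ^ ((1 / (α : ℝ) - lam) * (z : ℝ)) * ((z : ℝ) + 2) ^ (s * α - 1) := by
  have hb2 : 2 ≤ b := hb.two_le
  have hα0 : 0 < α := by omega
  have hb1 : (1 : ℝ) < b := by exact_mod_cast hb2
  have hb0 : (0 : ℝ) < b := by linarith
  have hS := series_summable b hb2 (1 / (α : ℝ) - lam) (by linarith) (s * α - 1)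
  refine ⟨hS, ?_⟩
  set μ := minWeight b α C with hμdef
  set g : ℕ → ℝ := fun z =>
    (b : ℝ) ^ ((1 / (α : ℝ) - lam) * (z : ℝ)) * ((z : ℝ) + 2) ^ (s * α - 1) with hg
  set K : ℝ := 2 ^ (s * α - 1) * ((b : ℝ) - 1) ^ (s * α) * (μ : ℝ) ^ (s * α - 1)
          * (b : ℝ) ^ (-(lam * (μ : ℝ))) with hK
  have hg0 : ∀ z, 0 ≤ g z := fun z => by positivity
  have hbm : (0 : ℝ) ≤ (b : ℝ) - 1 := by linarith
  have hK0 : 0 ≤ K := by positivity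
  have hf0 : (0 : {k : Fin s → ℕ // k ∈ dualNet b C ∧ k ≠ 0} → ℝ) ≤
      fun k => (b : ℝ) ^ (-(lam * (dickWeightV b α k.val : ℝ))) :=
    fun k => by simp only [Pi.zero_apply]; positivity
  have main : ∀ T : Finset {k : Fin s → ℕ // k ∈ dualNet b C ∧ k ≠ 0},
      ∑ k ∈ T, (b : ℝ) ^ (-(lam * (dickWeightV b α k.val : ℝ))) ≤ K * ∑' z, g z := by
    intro T
    rcases T.eq_empty_or_nonempty with rfl | ⟨⟨k₀, hk₀, hk₀'⟩, _⟩
    · simp only [Finset.sum_empty]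
      exact mul_nonneg hK0 (tsum_nonneg hg0)
    have hs : 0 < s := by
      rcases Nat.eq_zero_or_pos s with rfl | h
      · exact absurd (Subsingleton.elim _ _) hk₀'
      · exact h
    have hμ : 0 < μ := by
      obtain ⟨k, ⟨_, hk0⟩, hkw⟩ := Nat.sInf_mem
        (s := dickWeightV b α '' {k | k ∈ dualNet b C ∧ k ≠ 0}) ⟨_, k₀, ⟨hk₀, hk₀'⟩, rfl⟩
      have h1 : dickWeightV b α k = μ := hkw
      rw [← h1]
      obtain ⟨j, hj⟩ := Function.ne_iff.mp hk0
      exact Finset.sum_pos' (fun _ _ => Nat.zero_le _)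
        ⟨j, Finset.mem_univ _, dickWeight_pos hb2 hα0 hj⟩
    have hle : ∀ k : {k : Fin s → ℕ // k ∈ dualNet b C ∧ k ≠ 0}, μ ≤ dickWeightV b α k.val :=
      fun k => minWeight_le k.2.1 k.2.2
    classical
    rw [← Finset.sum_fiberwise_of_maps_to (s := T)
      (t := T.image fun k => dickWeightV b α k.val - μ)
      (g := fun k => dickWeightV b α k.val - μ) (fun k hk => Finset.mem_image_of_mem _ hk)]
    rw [← tsum_mul_left]
    refine le_trans (Finset.sum_le_sum fun z _ => ?_)
      ((hS.mul_left K).sum_le_tsum _ (fun z _ => mul_nonneg hK0 (hg0 z)))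
    have hw : ∀ k ∈ T.filter (fun k => dickWeightV b α k.val - μ = z),
        dickWeightV b α k.val = z + μ := by
      intro k hk
      have h1 := (Finset.mem_filter.mp hk).2
      have h2 := hle k
      omega
    rw [Finset.sum_congr rfl (fun k hk => by rw [hw k hk]), Finset.sum_const, nsmul_eq_mul]
    have hc := level_card (w := z + μ) hb2 hα0 (C := C) hμ hs
      ((T.filter (fun k => dickWeightV b α k.val - μ = z)).map (Function.Embedding.subtype _)) (by
        intro k hk
        obtain ⟨k', hk', rfl⟩ := Finset.mem_map.mp hk
        exact ⟨k'.2.1, k'.2.2, hw k' hk'⟩)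
    rw [Finset.card_map, ← hμdef, Nat.add_sub_cancel] at hc
    have hc' : ((T.filter (fun k => dickWeightV b α k.val - μ = z)).card : ℝ) ≤
        (b : ℝ) ^ (z / α : ℕ) * (((z : ℝ) + μ + 1) ^ (s * α - 1) * ((b : ℝ) - 1) ^ (s * α)) := by
      have h1 : ((b - 1 : ℕ) : ℝ) = (b : ℝ) - 1 := by
        rw [Nat.cast_sub (by omega)]; simp
      rw [← h1]
      exact_mod_cast hc
    have e1 : (b : ℝ) ^ (z / α : ℕ) ≤ (b : ℝ) ^ ((z : ℝ) / α) := by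
      rw [← Real.rpow_natCast]
      exact Real.rpow_le_rpow_of_exponent_le hb1.le Nat.cast_div_le
    have hμ1 : (1 : ℝ) ≤ μ := by exact_mod_cast hμ
    have e2 : ((z : ℝ) + μ + 1) ^ (s * α - 1) ≤ (2 * μ * ((z : ℝ) + 2)) ^ (s * α - 1) := by
      have hz : (0 : ℝ) ≤ z := Nat.cast_nonneg z
      refine pow_le_pow_left₀ (by positivity) ?_ _
      nlinarith [mul_nonneg hz (sub_nonneg.mpr hμ1)]
    have e3 : (b : ℝ) ^ (-(lam * ((z + μ : ℕ) : ℝ))) * (b : ℝ) ^ ((z : ℝ) / α) =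
        (b : ℝ) ^ (-(lam * (μ : ℝ))) * (b : ℝ) ^ ((1 / (α : ℝ) - lam) * (z : ℝ)) := by
      rw [← Real.rpow_add hb0, ← Real.rpow_add hb0]
      congr 1
      push_cast
      ring
    calc _ ≤ ((b : ℝ) ^ ((z : ℝ) / α) * ((2 * μ * ((z : ℝ) + 2)) ^ (s * α - 1)
            * ((b : ℝ) - 1) ^ (s * α))) * (b : ℝ) ^ (-(lam * ((z + μ : ℕ) : ℝ))) := by
          refine mul_le_mul_of_nonneg_right (hc'.trans ?_) (by positivity)
          gcongr
      _ = ((b : ℝ) ^ (-(lam * ((z + μ : ℕ) : ℝ))) * (b : ℝ) ^ ((z : ℝ) / α)) *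
            ((2 * μ * ((z : ℝ) + 2)) ^ (s * α - 1) * ((b : ℝ) - 1) ^ (s * α)) := by ring
      _ = K * g z := by
          rw [e3, hK, hg, mul_pow, mul_pow]
          ring
  exact ⟨summable_of_sum_le hf0 main, Real.tsum_le_of_sum_le hf0 main⟩
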